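/- Let x₀ ∈ ℝ, σ ∈ (0,√2), and let φ : (−∞,0]×ℝ → ℝ be a classical solution of φ_t = φ_xx + f′(w(x + x₀)) φ satisfying |φ(t,x)| ≤ C e^{σ|x|} for all (t,x) ∈ (−∞,0]×ℝ and some C > 0. Then for every σ̃ ∈ (0,√2) there exists a constant C′ > 0 (depending on C, σ, σ̃) such that |φ(t,x)| ≤ C′ e^{−σ̃|x|} for all (t,x) ∈ (−∞,0]×ℝ. -/

import Mathlib

open Real

noncomputable section

/-- The heteroclinic profile `w(s) = tanh(s/√2)`. -/
def w (s : ℝ) : ℝ := Real.tanh (s / Real.sqrt 2)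

/-- The Allen–Cahn nonlinearity `f(v) = v(1-v²)`. -/
def f (v : ℝ) : ℝ := v * (1 - v ^ 2)

/-- `f'`. -/
def f1 (v : ℝ) : ℝ := deriv f v

open Filter Topology Set

/-- At the point `(t, x)` the partial derivatives `v_t`, `v_x`, `v_xx` exist and
`v_t - v_xx = q`. -/
def HasHeatAt (v : ℝ → ℝ → ℝ) (q t x : ℝ) : Prop :=
  ∃ (v' : ℝ → ℝ) (e : ℝ), (∀ᶠ y in 𝓝 x, HasDerivAt (v t) (v' y) y) ∧ HasDerivAt v' e x ∧
    HasDerivAt (fun s => v s x) (e + q) t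

/-- Upper semicontinuity at `(t, x)` restricted to times not before `t`. -/
def RightUSCAt (v : ℝ → ℝ → ℝ) (t x : ℝ) : Prop :=
  ∀ c, v t x < c → ∀ᶠ p in 𝓝[≥] t ×ˢ 𝓝 x, v p.1 p.2 < c

namespace HasHeatAt

variable {u v : ℝ → ℝ → ℝ} {p q t x : ℝ}

lemma continuousAt_space (h : HasHeatAt v q t x) : ContinuousAt (v t) x := by
  obtain ⟨v', e, h1, -, -⟩ := h
  exact h1.self_of_nhds.continuousAt

lemma continuousAt_time (h : HasHeatAt v q t x) : ContinuousAt (fun s => v s x) t := by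
  obtain ⟨v', e, -, -, h3⟩ := h
  exact h3.continuousAt

lemma sub (hu : HasHeatAt u p t x) (hv : HasHeatAt v q t x) :
    HasHeatAt (fun s y => u s y - v s y) (p - q) t x := by
  obtain ⟨u', d, h1, h2, h3⟩ := hu
  obtain ⟨v', e, h4, h5, h6⟩ := hv
  refine ⟨fun y => u' y - v' y, d - e, ?_, h2.sub h5, ?_⟩
  · filter_upwards [h1, h4] with y hy hy' using hy.sub hy'
  · exact (h3.sub h6).congr_deriv (by ring)

lemma const_mul (c : ℝ) (hv : HasHeatAt v q t x) :
    HasHeatAt (fun s y => c * v s y) (c * q) t x := by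
  obtain ⟨v', e, h4, h5, h6⟩ := hv
  refine ⟨fun y => c * v' y, c * e, ?_, h5.const_mul c, ?_⟩
  · filter_upwards [h4] with y hy using hy.const_mul c
  · exact (h6.const_mul c).congr_deriv (by ring)

/-- The second derivative test in space turns the heat inequality into a sign of `v_t`. -/
lemma exists_hasDerivAt_nonpos (h : HasHeatAt v q t x) (hq : q ≤ 0)
    (hm : IsLocalMax (v t) x) : ∃ d ≤ 0, HasDerivAt (fun s => v s x) d t := by
  have hc := h.continuousAt_space
  obtain ⟨v', e, h1, h2, h3⟩ := h
  refine ⟨e + q, ?_, h3⟩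
  suffices e ≤ 0 by linarith
  by_contra! he
  have hd : deriv (v t) =ᶠ[𝓝 x] v' := by
    filter_upwards [h1] with y hy using hy.deriv
  have hdd : deriv (deriv (v t)) x = e := by rw [hd.deriv_eq, h2.deriv]
  have hmin : IsLocalMin (v t) x :=
    isLocalMin_of_deriv_deriv_pos (by rw [hdd]; exact he) hm.deriv_eq_zero hc
  have hconst : v t =ᶠ[𝓝 x] fun _ => v t x := by
    filter_upwards [hm, hmin] with y hy hy' using le_antisymm hy hy'
  have : deriv (deriv (v t)) x = 0 := by
    rw [hconst.deriv.deriv_eq]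
    simp
  linarith

end HasHeatAt

lemma hasHeatAt_const (c t x : ℝ) : HasHeatAt (fun _ _ => c) 0 t x :=
  ⟨fun _ => 0, 0, Eventually.of_forall fun y => hasDerivAt_const y c, hasDerivAt_const x 0,
    by simpa using hasDerivAt_const t c⟩

lemma hasHeatAt_time (t x : ℝ) : HasHeatAt (fun s _ => s) 1 t x :=
  ⟨fun _ => 0, 0, Eventually.of_forall fun y => hasDerivAt_const y t, hasDerivAt_const x 0,
    (hasDerivAt_id t).congr_deriv (by simp)⟩

lemma hasHeatAt_exp (k m t x : ℝ) :
    HasHeatAt (fun s y => exp (k * y + m * s)) ((m - k ^ 2) * exp (k * x + m * t)) t x := by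
  have h : ∀ y, HasDerivAt (fun y => exp (k * y + m * t)) (exp (k * y + m * t) * k) y := fun y => by
    have := (((hasDerivAt_id y).const_mul k).add_const (m * t)).exp
    simpa using this
  refine ⟨fun y => exp (k * y + m * t) * k, exp (k * x + m * t) * k * k,
    Eventually.of_forall h, (h x).mul_const k, ?_⟩
  have := (((hasDerivAt_id t).const_mul m).const_add (k * x)).exp
  exact this.congr_deriv (by simp only [id]; ring)

/-- The caloric quadratic polynomial. -/
lemma hasHeatAt_quadratic (t₀ x₀ t x : ℝ) :
    HasHeatAt (fun s y => (y - x₀) ^ 2 + 2 * (s - t₀)) 0 t x := by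
  refine ⟨fun y => 2 * (y - x₀), 2, Eventually.of_forall fun y => ?_, ?_, ?_⟩
  · simpa using (((hasDerivAt_id y).sub_const x₀).pow 2).add_const (2 * (t - t₀))
  · simpa using ((hasDerivAt_id x).sub_const x₀).const_mul 2
  · simpa using (((hasDerivAt_id t).sub_const t₀).const_mul 2).const_add ((x - x₀) ^ 2)

/-- The heat kernel up to normalization, with pole at `(r, c)`. -/
def gaussKernel (r c t x : ℝ) : ℝ :=
  exp (-(1 / 2) * log (t - r) - (x - c) ^ 2 / (4 * (t - r)))

lemma hasHeatAt_gaussKernel {r c t x : ℝ} (h : r < t) : HasHeatAt (gaussKernel r c) 0 t x := by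
  have hr : t - r ≠ 0 := by linarith
  have h1 : ∀ y, HasDerivAt (gaussKernel r c t)
      (gaussKernel r c t y * (-(y - c) / (2 * (t - r)))) y := fun y => by
    have h : HasDerivAt (fun y => -(1 / 2) * log (t - r) - (y - c) ^ 2 / (4 * (t - r)))
        (-(y - c) / (2 * (t - r))) y := by
      refine (((((hasDerivAt_id y).sub_const c).pow 2).div_const (4 * (t - r))).const_sub
        (-(1 / 2) * log (t - r))).congr_deriv ?_
      simp only [id]
      field_simp
      norm_num
      ring
    exact h.exp
  have h2 : HasDerivAt (fun y => -(y - c) / (2 * (t - r))) (-1 / (2 * (t - r))) x :=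
    (((hasDerivAt_id x).sub_const c).neg).div_const _
  refine ⟨_, _, Eventually.of_forall h1, (h1 x).mul h2, ?_⟩
  have h3 : HasDerivAt (fun s => s - r) 1 t := (hasDerivAt_id t).sub_const r
  have h4 : HasDerivAt (fun s => -(1 / 2) * log (s - r) - (x - c) ^ 2 / (4 * (s - r)))
      (-1 / (2 * (t - r)) + (x - c) ^ 2 / (4 * (t - r) ^ 2)) t := by
    refine (((h3.log hr).const_mul (-(1 / 2))).sub
      ((hasDerivAt_const t ((x - c) ^ 2)).div (h3.const_mul 4) (by simpa using hr))).congr_deriv ?_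
    field_simp
    ring
  refine h4.exp.congr_deriv ?_
  change gaussKernel r c t x * _ = _
  field_simp
  ring

lemma continuousAt_gaussKernel {r c t x : ℝ} (h : r < t) :
    ContinuousAt (fun p : ℝ × ℝ => gaussKernel r c p.1 p.2) (t, x) := by
  have hr : t - r ≠ 0 := by linarith
  unfold gaussKernel
  have h1 : ContinuousAt (fun p : ℝ × ℝ => log (p.1 - r)) (t, x) :=
    ContinuousAt.log (by fun_prop) hr
  have h2 : ContinuousAt (fun p : ℝ × ℝ => (p.2 - c) ^ 2 / (4 * (p.1 - r))) (t, x) :=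
    ContinuousAt.div (by fun_prop) (by fun_prop) (by simpa using hr)
  fun_prop

lemma RightUSCAt.sub {u z : ℝ → ℝ → ℝ} {t x : ℝ} (hu : RightUSCAt u t x)
    (hz : ContinuousAt (fun p : ℝ × ℝ => z p.1 p.2) (t, x)) :
    RightUSCAt (fun s y => u s y - z s y) t x := by
  intro c hc
  have hle : 𝓝[≥] t ×ˢ 𝓝 x ≤ 𝓝 (t, x) := by
    rw [nhds_prod_eq]
    exact prod_mono_left _ nhdsWithin_le_nhds
  have h1 := hu (u t x + (c - (u t x - z t x)) / 2) (by linarith)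
  have h2 : ∀ᶠ p in 𝓝 (t, x), z t x - (c - (u t x - z t x)) / 2 < z p.1 p.2 :=
    hz.eventually (lt_mem_nhds (by dsimp only; linarith))
  filter_upwards [h1, hle h2] with p hp hp'
  have hp'' : z t x - (c - (u t x - z t x)) / 2 < z p.1 p.2 := hp'
  linarith

/-- Right upper semicontinuity is uniform over compact sets of the space variable. -/
lemma eventually_forall_lt {v : ℝ → ℝ → ℝ} {t c : ℝ} {K : Set ℝ} (hK : IsCompact K)
    (husc : ∀ x ∈ K, RightUSCAt v t x) (hlt : ∀ x ∈ K, v t x < c) :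
    ∀ᶠ s in 𝓝[≥] t, ∀ x ∈ K, v s x < c := by
  have h := hK.mem_prod_nhdsSet_of_forall (l := 𝓝[≥] t) (s := {p : ℝ × ℝ | v p.1 p.2 < c})
    fun x hx => husc x hx c (hlt x hx)
  obtain ⟨A, hA, B, hB, hAB⟩ := mem_prod_iff.1 h
  filter_upwards [hA] with s hs x hx
  exact hAB (mk_mem_prod hs (subset_of_mem_nhdsSet hB hx))

/-- The weak maximum principle on a rectangle. -/
theorem nonpos_of_parabolic_boundary {v : ℝ → ℝ → ℝ} {τ T α β : ℝ}
    (hcont : ∀ t ∈ Icc τ T, ContinuousOn (v t) (Icc α β))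
    (husc : ∀ t ∈ Icc τ T, ∀ x ∈ Icc α β, RightUSCAt v t x)
    (hside : ∀ t ∈ Icc τ T, v t α ≤ 0 ∧ v t β ≤ 0)
    (hinit : ∀ x ∈ Icc α β, v τ x ≤ 0)
    (hmax : ∀ t ∈ Icc τ T, ∀ x ∈ Ioo α β, 0 < v t x → ∃ q ≤ 0, HasHeatAt v q t x) :
    ∀ t ∈ Icc τ T, ∀ x ∈ Icc α β, v t x ≤ 0 := by
  intro t₁ ht₁ x₁ hx₁
  by_contra! hpos
  obtain ⟨ε, hε, hεm⟩ : ∃ ε > 0, ε * (t₁ - τ + 1) ≤ v t₁ x₁ := by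
    have : 0 < t₁ - τ + 1 := by linarith [ht₁.1]
    exact ⟨v t₁ x₁ / (t₁ - τ + 1), by positivity, by field_simp; rfl⟩
  set A : Set ℝ := {s | s ∈ Icc τ t₁ ∧ ∃ x ∈ Icc α β, ε * (s - τ + 1) ≤ v s x} with hA
  have hAne : A.Nonempty := ⟨t₁, ⟨ht₁.1, le_rfl⟩, x₁, hx₁, hεm⟩
  have hAbdd : BddBelow A := ⟨τ, fun s hs => hs.1.1⟩
  set s₀ := sInf A
  have hs₀ : s₀ ∈ Icc τ t₁ :=
    ⟨le_csInf hAne fun s hs => hs.1.1, csInf_le hAbdd ⟨⟨ht₁.1, le_rfl⟩, x₁, hx₁, hεm⟩⟩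
  have hs₀T : s₀ ∈ Icc τ T := ⟨hs₀.1, hs₀.2.trans ht₁.2⟩
  have hmem : s₀ ∈ A := by
    by_contra hn
    have hlt : ∀ x ∈ Icc α β, v s₀ x < ε * (s₀ - τ + 1) := by
      intro x hx
      by_contra! hge
      exact hn ⟨hs₀, x, hx, hge⟩
    have hev := eventually_forall_lt isCompact_Icc (husc s₀ hs₀T) hlt
    obtain ⟨δ, hδ, hball⟩ := Metric.mem_nhdsWithin_iff.1 hev
    obtain ⟨s, hsA, hs⟩ := exists_lt_of_csInf_lt hAne (show sInf A < s₀ + δ by linarith)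
    have hge : s₀ ≤ s := csInf_le hAbdd hsA
    obtain ⟨x, hx, hvx⟩ := hsA.2
    have := hball ⟨by rw [Metric.mem_ball, Real.dist_eq, abs_of_nonneg (by linarith)]; linarith,
      hge⟩ x hx
    nlinarith
  obtain ⟨-, x₂, hx₂, hvx₂⟩ := hmem
  obtain ⟨y, hy, hymax⟩ := isCompact_Icc.exists_isMaxOn ⟨x₂, hx₂⟩ (hcont s₀ hs₀T)
  have hvy : ε * (s₀ - τ + 1) ≤ v s₀ y := hvx₂.trans (hymax hx₂)
  have hvpos : 0 < v s₀ y := by nlinarith [hs₀.1]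
  have hτ : τ < s₀ := by
    rcases hs₀.1.lt_or_eq with h | h
    · exact h
    · have := hinit y hy
      rw [h] at this
      linarith
  have hyI : y ∈ Ioo α β := by
    refine ⟨lt_of_le_of_ne hy.1 ?_, lt_of_le_of_ne hy.2 ?_⟩
    · rintro rfl
      linarith [(hside s₀ hs₀T).1]
    · rintro rfl
      linarith [(hside s₀ hs₀T).2]
  obtain ⟨q, hq, hheat⟩ := hmax s₀ hs₀T y hyI hvpos
  obtain ⟨d, hd, hder⟩ := hheat.exists_hasDerivAt_nonpos hq
    (hymax.isLocalMax (Icc_mem_nhds hyI.1 hyI.2))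
  have hslope : ∀ᶠ s in 𝓝[<] s₀, slope (fun s => v s y) s₀ s < ε :=
    ((hasDerivAt_iff_tendsto_slope.1 hder).mono_left
      (nhdsWithin_mono _ fun s hs => ne_of_lt hs)).eventually (gt_mem_nhds (by linarith))
  obtain ⟨s, hs1, hs2, hs3⟩ := (hslope.and (Ioo_mem_nhdsLT hτ)).exists
  rw [slope_def_field, div_lt_iff_of_neg (by linarith)] at hs1
  have : s ∈ A := ⟨⟨hs2.le, hs3.le.trans hs₀.2⟩, y, hy, by nlinarith⟩
  linarith [csInf_le hAbdd this]

lemma half_le_mul_gaussKernel {ε r c x : ℝ} (hε : 0 < ε) (hx : |x - c| ≤ ε) :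
    1 / 2 ≤ ε * gaussKernel (r - ε ^ 2) c r x := by
  have h1 : r - (r - ε ^ 2) = ε ^ 2 := by ring
  have h2 : ε * gaussKernel (r - ε ^ 2) c r x = exp (-((x - c) ^ 2 / (4 * ε ^ 2))) := by
    rw [gaussKernel, h1, log_pow]
    have : -(1 / 2) * (((2 : ℕ) : ℝ) * log ε) - (x - c) ^ 2 / (4 * ε ^ 2) =
        -log ε + -((x - c) ^ 2 / (4 * ε ^ 2)) := by
      push_cast
      ring
    rw [this, exp_add, exp_neg, exp_log hε]
    field_simp
  have h3 : (x - c) ^ 2 / (4 * ε ^ 2) ≤ 1 / 4 := by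
    rw [div_le_div_iff₀ (by positivity) (by norm_num)]
    nlinarith [sq_le_sq' (by linarith [(abs_le.1 hx).1]) (abs_le.1 hx).2]
  rw [h2]
  linarith [add_one_le_exp (-((x - c) ^ 2 / (4 * ε ^ 2)))]

lemma gaussKernel_le {r c t x h : ℝ} (hh : 0 < h) (ht : h ≤ t - r) :
    gaussKernel r c t x ≤ exp (-(1 / 2) * log h) := by
  have h1 := log_le_log hh ht
  have h2 : 0 ≤ (x - c) ^ 2 / (4 * (t - r)) := div_nonneg (sq_nonneg _) (by linarith)
  exact exp_le_exp.2 (by linarith)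

lemma gaussKernel_pos (r c t x : ℝ) : 0 < gaussKernel r c t x := exp_pos _

/-- The maximum principle for bounded subsolutions whose semicontinuity may fail at the two
lower corners of the rectangle. -/
theorem nonpos_of_corners {v : ℝ → ℝ → ℝ} {τ T α β M : ℝ} (hτT : τ < T)
    (hheat : ∀ t ∈ Ioc τ T, ∀ x ∈ Icc α β, ∃ q ≤ 0, HasHeatAt v q t x)
    (husc : ∀ t ∈ Icc τ T, ∀ x ∈ Icc α β, τ < t ∨ x ∈ Ioo α β → RightUSCAt v t x)
    (hM : ∀ t ∈ Icc τ T, ∀ x ∈ Icc α β, v t x ≤ M)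
    (hside : ∀ t ∈ Icc τ T, v t α ≤ 0 ∧ v t β ≤ 0)
    (hinit : ∀ x ∈ Icc α β, v τ x ≤ 0) :
    ∀ x ∈ Icc α β, v T x ≤ 0 := by
  intro x hx
  wlog hM0 : 0 < M generalizing M
  · exact this (M := |M| + 1) (fun t ht y hy => (hM t ht y hy).trans
      ((le_abs_self M).trans (by linarith))) (by positivity)
  set Q := exp (-(1 / 2) * log ((T - τ) / 2)) with hQ
  have hQ0 : 0 < Q := exp_pos _
  have key : ∀ ε > 0, v T x ≤ ε + 4 * M * ε * Q := by
    intro ε hε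
    have hev : ∀ᶠ s in 𝓝[≥] τ, ∀ y ∈ Icc (α + ε) (β - ε), v s y < ε := by
      have hsub : ∀ y ∈ Icc (α + ε) (β - ε), y ∈ Ioo α β := fun y hy =>
        ⟨by linarith [hy.1], by linarith [hy.2]⟩
      refine eventually_forall_lt isCompact_Icc (fun y hy => ?_) (fun y hy => ?_)
      · exact husc τ ⟨le_rfl, hτT.le⟩ y (Ioo_subset_Icc_self (hsub y hy)) (Or.inr (hsub y hy))
      · exact (hinit y (Ioo_subset_Icc_self (hsub y hy))).trans_lt hε
    have hev2 : ∀ᶠ s in 𝓝[>] τ, s < τ + (T - τ) / 2 :=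
      nhdsWithin_le_nhds (gt_mem_nhds (by linarith))
    obtain ⟨r, ⟨hr1, hr2⟩, hr3⟩ :=
      (((hev.filter_mono (nhdsWithin_mono _ Ioi_subset_Ici_self)).and hev2).and
        self_mem_nhdsWithin).exists
    have hr3 : τ < r := hr3
    have hsub : Icc r T ⊆ Icc τ T := Icc_subset_Icc_left hr3.le
    have hε2 : 0 < ε ^ 2 := by positivity
    set z : ℝ → ℝ → ℝ := fun s y => v s y - ε
      - 2 * M * ε * gaussKernel (r - ε ^ 2) α s y - 2 * M * ε * gaussKernel (r - ε ^ 2) β s y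
      with hz
    have hK : 0 < 2 * M * ε := by positivity
    have hheatz : ∀ t ∈ Icc r T, ∀ y ∈ Icc α β, ∃ q ≤ 0, HasHeatAt z q t y := by
      intro t ht y hy
      obtain ⟨q, hq, h⟩ := hheat t ⟨hr3.trans_le ht.1, ht.2⟩ y hy
      have hg : ∀ c, HasHeatAt (gaussKernel (r - ε ^ 2) c) 0 t y := fun c =>
        hasHeatAt_gaussKernel (by linarith [ht.1])
      exact ⟨_, by simpa using hq, ((h.sub (hasHeatAt_const ε t y)).sub
        ((hg α).const_mul (2 * M * ε))).sub ((hg β).const_mul (2 * M * ε))⟩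
    have hzle : ∀ s y, z s y ≤ v s y := fun s y => by
      have h1 := mul_pos hK (gaussKernel_pos (r - ε ^ 2) α s y)
      have h2 := mul_pos hK (gaussKernel_pos (r - ε ^ 2) β s y)
      simp only [hz]
      linarith
    have hfin : z T x ≤ 0 := by
      refine nonpos_of_parabolic_boundary (τ := r) (T := T) (α := α) (β := β) ?_ ?_ ?_ ?_ ?_
        T ⟨by linarith, le_rfl⟩ x hx
      · intro t ht y hy
        obtain ⟨q, -, h⟩ := hheatz t ht y hy
        exact h.continuousAt_space.continuousWithinAt
      · intro t ht y hy
        have hg : ∀ c, ContinuousAt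
            (fun p : ℝ × ℝ => 2 * M * ε * gaussKernel (r - ε ^ 2) c p.1 p.2) (t, y) := fun c =>
          (continuousAt_gaussKernel (by linarith [ht.1])).const_mul _
        exact (((husc t (hsub ht) y hy (Or.inl (hr3.trans_le ht.1))).sub
          (z := fun _ _ => ε) continuousAt_const).sub (hg α)).sub (hg β)
      · intro t ht
        exact ⟨(hzle _ _).trans (hside t (hsub ht)).1, (hzle _ _).trans (hside t (hsub ht)).2⟩
      · intro y hy
        have h1 := mul_pos hK (gaussKernel_pos (r - ε ^ 2) α r y)
        have h2 := mul_pos hK (gaussKernel_pos (r - ε ^ 2) β r y)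
        have hMy := hM r ⟨hr3.le, by linarith⟩ y hy
        simp only [hz]
        rcases le_total y (α + ε) with hya | hya
        · have := half_le_mul_gaussKernel (r := r) (c := α) (x := y) hε
            (abs_le.2 ⟨by linarith [hy.1], by linarith⟩)
          nlinarith
        · rcases le_total (β - ε) y with hyb | hyb
          · have := half_le_mul_gaussKernel (r := r) (c := β) (x := y) hε
              (abs_le.2 ⟨by linarith, by linarith [hy.2]⟩)
            nlinarith
          · linarith [hr1 y ⟨hya, hyb⟩]
      · intro t ht y hy _
        exact hheatz t ht y (Ioo_subset_Icc_self hy)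
    have hg : ∀ c, gaussKernel (r - ε ^ 2) c T x ≤ Q := fun c =>
      gaussKernel_le (by linarith) (by linarith)
    have h1 := mul_le_mul_of_nonneg_left (hg α) hK.le
    have h2 := mul_le_mul_of_nonneg_left (hg β) hK.le
    simp only [hz] at hfin
    linarith
  refine le_of_forall_pos_le_add fun η hη => ?_
  have hden : 0 < 1 + 4 * M * Q := by positivity
  have := key (η / (1 + 4 * M * Q)) (by positivity)
  have h2 : η / (1 + 4 * M * Q) + 4 * M * (η / (1 + 4 * M * Q)) * Q = η := by
    field_simp
  linarith

/-- A bound for a subsolution on a rectangle, when every point of the closed set `F` propagates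
the bound `m` along the horizontal and the vertical line through it. -/
theorem le_of_cross {u : ℝ → ℝ → ℝ} {t₀ x₀ ρ m M : ℝ} {F : Set (ℝ × ℝ)} (hρ : 0 < ρ)
    (hF : IsClosed (F ∩ Icc t₀ (t₀ + ρ) ×ˢ Icc (x₀ - ρ) (x₀ + ρ))) (h₀ : (t₀, x₀) ∈ F)
    (hheat : ∀ t ∈ Icc t₀ (t₀ + ρ), ∀ x ∈ Icc (x₀ - ρ) (x₀ + ρ), ∃ q ≤ 0, HasHeatAt u q t x)
    (husc : ∀ t ∈ Icc t₀ (t₀ + ρ), ∀ x ∈ Icc (x₀ - ρ) (x₀ + ρ), (t, x) ∉ F → RightUSCAt u t x)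
    (hM : ∀ t ∈ Icc t₀ (t₀ + ρ), ∀ x ∈ Icc (x₀ - ρ) (x₀ + ρ), u t x ≤ m + M) (hM0 : 0 ≤ M)
    (hcross : ∀ s ∈ Icc t₀ (t₀ + ρ), ∀ y ∈ Icc (x₀ - ρ) (x₀ + ρ), (s, y) ∈ F →
      (∀ t ∈ Icc t₀ (t₀ + ρ), u t y ≤ m) ∧ (∀ x ∈ Icc (x₀ - ρ) (x₀ + ρ), u s x ≤ m)) :
    ∀ t ∈ Icc t₀ (t₀ + ρ), ∀ x ∈ Icc (x₀ - ρ) (x₀ + ρ),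
      u t x ≤ m + M / ρ ^ 2 * ((x - x₀) ^ 2 + 2 * (t - t₀)) := by
  intro t ht x hx
  set I := Icc t₀ (t₀ + ρ) with hI
  set J := Icc (x₀ - ρ) (x₀ + ρ) with hJ
  have hMρ : 0 ≤ M / ρ ^ 2 := by positivity
  have hb : ∀ s ∈ I, ∀ y, 0 ≤ M / ρ ^ 2 * ((y - x₀) ^ 2 + 2 * (s - t₀)) := fun s hs y =>
    mul_nonneg hMρ (by nlinarith [sq_nonneg (y - x₀), hs.1])
  have hcomp : IsCompact (F ∩ I ×ˢ J) :=
    (isCompact_Icc.prod isCompact_Icc).of_isClosed_subset hF inter_subset_right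
  set P : Set ℝ := Prod.fst '' (F ∩ I ×ˢ J) with hP
  set Y : Set ℝ := Prod.snd '' (F ∩ I ×ˢ J) ∪ {x₀ - ρ, x₀ + ρ} with hY
  have hPc : IsCompact P := hcomp.image continuous_fst
  have hYc : IsCompact Y := (hcomp.image continuous_snd).union (by simp)
  have hPle : ∀ s ∈ P, ∀ y ∈ J, u s y ≤ m := by
    rintro _ ⟨⟨s, y'⟩, ⟨hF', hs, hy'⟩, rfl⟩ y hy
    exact (hcross s hs y' hy' hF').2 y hy
  have hYle : ∀ y ∈ Y, ∀ s ∈ I, u s y ≤ m + M / ρ ^ 2 * ((y - x₀) ^ 2 + 2 * (s - t₀)) := by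
    rintro y hy s hs
    rcases hy with ⟨⟨s', y'⟩, ⟨hF', hs', hy'⟩, rfl⟩ | hy
    · linarith [(hcross s' hs' y' hy' hF').1 s hs, hb s hs y']
    · have hyJ : y ∈ J := by
        rcases hy with rfl | rfl <;> constructor <;> linarith
      have hsq : (y - x₀) ^ 2 = ρ ^ 2 := by
        rcases hy with rfl | rfl <;> ring
      have h1 := hM s hs y hyJ
      have h2 : M / ρ ^ 2 * ρ ^ 2 = M := by field_simp
      have h3 : 0 ≤ M / ρ ^ 2 * (2 * (s - t₀)) := mul_nonneg hMρ (by linarith [hs.1])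
      rw [hsq, mul_add]
      linarith
  by_cases htP : t ∈ P
  · linarith [hPle t htP x hx, hb t ht x]
  by_cases hxY : x ∈ Y
  · exact hYle x hxY t ht
  have ht₀ : t₀ ∈ P := ⟨(t₀, x₀), ⟨h₀, ⟨le_rfl, by linarith⟩, ⟨by linarith, by linarith⟩⟩, rfl⟩
  obtain ⟨τ, hτ⟩ := (hPc.inter_right (isClosed_Iic (a := t))).exists_isGreatest ⟨t₀, ht₀, ht.1⟩
  obtain ⟨α, hα⟩ := (hYc.inter_right (isClosed_Iic (a := x))).exists_isGreatest
    ⟨x₀ - ρ, Or.inr (by simp), hx.1⟩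
  obtain ⟨β, hβ⟩ := (hYc.inter_right (isClosed_Ici (a := x))).exists_isLeast
    ⟨x₀ + ρ, Or.inr (by simp), hx.2⟩
  have hτt : τ < t := lt_of_le_of_ne hτ.1.2 fun h => htP (h ▸ hτ.1.1)
  have ht₀τ : t₀ ≤ τ := hτ.2 ⟨ht₀, ht.1⟩
  have hαJ : x₀ - ρ ≤ α := hα.2 ⟨Or.inr (by simp), hx.1⟩
  have hβJ : β ≤ x₀ + ρ := hβ.2 ⟨Or.inr (by simp), hx.2⟩
  have hIsub : Icc τ t ⊆ I := Icc_subset_Icc ht₀τ ht.2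
  have hJsub : Icc α β ⊆ J := Icc_subset_Icc hαJ hβJ
  have hFt : ∀ s ∈ Ioc τ t, ∀ y ∈ J, (s, y) ∉ F := fun s hs y hy hF' =>
    absurd (hτ.2 ⟨⟨(s, y), ⟨hF', hIsub (Ioc_subset_Icc_self hs), hy⟩, rfl⟩, hs.2⟩) (not_le.2 hs.1)
  have hFy : ∀ s ∈ I, ∀ y ∈ Ioo α β, (s, y) ∉ F := fun s hs y hy hF' => by
    have hyY : y ∈ Y := Or.inl ⟨(s, y), ⟨hF', hs, hJsub (Ioo_subset_Icc_self hy)⟩, rfl⟩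
    rcases le_total y x with h | h
    · exact absurd (hα.2 ⟨hyY, h⟩) (not_le.2 hy.1)
    · exact absurd (hβ.2 ⟨hyY, h⟩) (not_le.2 hy.2)
  have hcontq : ∀ s y, ContinuousAt
      (fun p : ℝ × ℝ => M / ρ ^ 2 * ((p.2 - x₀) ^ 2 + 2 * (p.1 - t₀))) (s, y) := fun s y => by
    fun_prop
  have hfin := nonpos_of_corners (τ := τ) (T := t) (α := α) (β := β) (M := M)
    (v := fun s y => u s y - m - M / ρ ^ 2 * ((y - x₀) ^ 2 + 2 * (s - t₀))) hτt ?_ ?_ ?_ ?_ ?_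
    x ⟨hα.1.2, hβ.1.2⟩
  · linarith
  · intro s hs y hy
    obtain ⟨q, hq, h⟩ := hheat s (hIsub (Ioc_subset_Icc_self hs)) y (hJsub hy)
    exact ⟨_, by simpa using hq, (h.sub (hasHeatAt_const m s y)).sub
      ((hasHeatAt_quadratic t₀ x₀ s y).const_mul (M / ρ ^ 2))⟩
  · intro s hs y hy hor
    have hn : (s, y) ∉ F := by
      rcases hor with h | h
      · exact hFt s ⟨h, hs.2⟩ y (hJsub hy)
      · exact hFy s (hIsub hs) y h
    exact ((husc s (hIsub hs) y (hJsub hy) hn).sub (z := fun _ _ => m) continuousAt_const).sub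
      (hcontq s y)
  · intro s hs y hy
    linarith [hM s (hIsub hs) y (hJsub hy), hb s (hIsub hs) y]
  · intro s hs
    constructor
    · linarith [hYle α hα.1.1 s (hIsub hs)]
    · linarith [hYle β hβ.1.1 s (hIsub hs)]
  · intro y hy
    linarith [hPle τ hτ.1.1 y (hJsub hy), hb τ (hIsub ⟨le_rfl, hτt.le⟩) y]

/-- The points `p` at which `u` is `L`-Lipschitz with respect to `p` along both coordinate lines
through `p`, up to distance `1 / L` and inside `Ω`. -/
def lipCross (u : ℝ → ℝ → ℝ) (Ω : Set (ℝ × ℝ)) (L : ℝ) : Set (ℝ × ℝ) :=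
  {p | (∀ s, (s, p.2) ∈ Ω → |s - p.1| < 1 / L → |u s p.2 - u p.1 p.2| ≤ L * |s - p.1|) ∧
    (∀ y, (p.1, y) ∈ Ω → |y - p.2| < 1 / L → |u p.1 y - u p.1 p.2| ≤ L * |y - p.2|)}

lemma mem_lipCross_of_mem_closure {u : ℝ → ℝ → ℝ} {Ω : Set (ℝ × ℝ)} {L : ℝ} (hL : 0 < L)
    (hΩ : IsOpen Ω) (hheat : ∀ p ∈ Ω, ∃ q ≤ 0, HasHeatAt u q p.1 p.2) {p : ℝ × ℝ} (hp : p ∈ Ω)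
    (hcl : p ∈ closure (lipCross u Ω L)) : p ∈ lipCross u Ω L := by
  obtain ⟨t, x⟩ := p
  have hne : (𝓝[lipCross u Ω L] (t, x)).NeBot := mem_closure_iff_nhdsWithin_neBot.1 hcl
  have hspace : ∀ s y, (s, y) ∈ Ω → ContinuousAt (u s) y := fun s y h => by
    obtain ⟨q, -, hq⟩ := hheat _ h
    exact hq.continuousAt_space
  have htime : ∀ s y, (s, y) ∈ Ω → ContinuousAt (fun r => u r y) s := fun s y h => by
    obtain ⟨q, -, hq⟩ := hheat _ h
    exact hq.continuousAt_time
  have hfst : Tendsto (fun z : ℝ × ℝ => z.1) (𝓝[lipCross u Ω L] (t, x)) (𝓝 t) :=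
    (continuous_fst.tendsto (t, x)).mono_left nhdsWithin_le_nhds
  have hsnd : Tendsto (fun z : ℝ × ℝ => z.2) (𝓝[lipCross u Ω L] (t, x)) (𝓝 x) :=
    (continuous_snd.tendsto (t, x)).mono_left nhdsWithin_le_nhds
  have hux : Tendsto (fun z : ℝ × ℝ => u t z.2) (𝓝[lipCross u Ω L] (t, x)) (𝓝 (u t x)) :=
    (hspace t x hp).tendsto.comp hsnd
  have hmem : ∀ᶠ z : ℝ × ℝ in 𝓝[lipCross u Ω L] (t, x), (t, z.2) ∈ Ω :=
    (tendsto_const_nhds.prodMk_nhds hsnd).eventually (hΩ.mem_nhds hp)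
  have hdist : ∀ᶠ z : ℝ × ℝ in 𝓝[lipCross u Ω L] (t, x), |t - z.1| < 1 / L :=
    (tendsto_const_nhds.sub hfst).abs.eventually (gt_mem_nhds (by simpa using hL))
  have hself : ∀ᶠ z : ℝ × ℝ in 𝓝[lipCross u Ω L] (t, x), z ∈ lipCross u Ω L :=
    self_mem_nhdsWithin
  constructor
  · intro s hs hst
    have hmem' : ∀ᶠ z : ℝ × ℝ in 𝓝[lipCross u Ω L] (t, x), (s, z.2) ∈ Ω :=
      (tendsto_const_nhds.prodMk_nhds hsnd).eventually (hΩ.mem_nhds hs)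
    have hdist' : ∀ᶠ z : ℝ × ℝ in 𝓝[lipCross u Ω L] (t, x), |s - z.1| < 1 / L :=
      (tendsto_const_nhds.sub hfst).abs.eventually (gt_mem_nhds hst)
    have hlim1 := (((hspace s x hs).tendsto.comp hsnd).sub hux).abs
    have hlim2 := ((tendsto_const_nhds (x := s)).sub hfst).abs.const_mul L |>.add
      (((tendsto_const_nhds (x := t)).sub hfst).abs.const_mul L)
    have := le_of_tendsto_of_tendsto hlim1 hlim2 ?_
    · simpa using this
    · filter_upwards [hmem, hdist, hself, hmem', hdist'] with z h1 h2 h3 h4 h5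
      have h6 := h3.1 s h4 h5
      have h7 := h3.1 t h1 h2
      calc |u s z.2 - u t z.2| = |(u s z.2 - u z.1 z.2) - (u t z.2 - u z.1 z.2)| := by ring_nf
        _ ≤ |u s z.2 - u z.1 z.2| + |u t z.2 - u z.1 z.2| := abs_sub _ _
        _ ≤ _ := add_le_add h6 h7
  · intro y hy hyx
    have hmem' : ∀ᶠ z : ℝ × ℝ in 𝓝[lipCross u Ω L] (t, x), (z.1, y) ∈ Ω :=
      (hfst.prodMk_nhds tendsto_const_nhds).eventually (hΩ.mem_nhds hy)
    have hdist' : ∀ᶠ z : ℝ × ℝ in 𝓝[lipCross u Ω L] (t, x), |y - z.2| < 1 / L :=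
      (tendsto_const_nhds.sub hsnd).abs.eventually (gt_mem_nhds hyx)
    have hlim1 := (((htime t y hy).tendsto.comp hfst).sub hux).abs
    have hlim2 := ((tendsto_const_nhds (x := y)).sub hsnd).abs.const_mul L |>.add
      (((tendsto_const_nhds (x := t)).sub hfst).abs.const_mul L)
    have := le_of_tendsto_of_tendsto hlim1 hlim2 ?_
    · simpa using this
    · filter_upwards [hmem, hdist, hself, hmem', hdist'] with z h1 h2 h3 h4 h5
      have h6 := h3.2 y h4 h5
      have h7 := h3.1 t h1 h2
      calc |u z.1 y - u t z.2| = |(u z.1 y - u z.1 z.2) - (u t z.2 - u z.1 z.2)| := by ring_nf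
        _ ≤ |u z.1 y - u z.1 z.2| + |u t z.2 - u z.1 z.2| := abs_sub _ _
        _ ≤ _ := add_le_add h6 h7

lemma HasDerivAt.exists_lipschitz_bound {g : ℝ → ℝ} {d x : ℝ} (h : HasDerivAt g d x) :
    ∃ K, ∀ L, K ≤ L → ∀ y, |y - x| < 1 / L → |g y - g x| ≤ L * |y - x| := by
  obtain ⟨c, hc⟩ := h.isBigO_sub.bound
  obtain ⟨δ, hδ, hball⟩ := Metric.eventually_nhds_iff.1 hc
  refine ⟨max c (1 / δ), fun L hL y hy => ?_⟩
  have h1 : 1 / L ≤ δ := by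
    have := (le_max_right c (1 / δ)).trans hL
    rw [one_div_le (lt_of_lt_of_le (by positivity) this) hδ]
    exact this
  have h2 := hball (y := y) (by rw [Real.dist_eq]; linarith)
  simp only [Real.norm_eq_abs] at h2
  exact h2.trans (mul_le_mul_of_nonneg_right ((le_max_left _ _).trans hL) (abs_nonneg _))

lemma HasHeatAt.exists_mem_lipCross {u : ℝ → ℝ → ℝ} {q t x : ℝ} (h : HasHeatAt u q t x)
    (Ω : Set (ℝ × ℝ)) : ∃ n : ℕ, (t, x) ∈ lipCross u Ω (n + 1) := by
  obtain ⟨u', e, h1, -, h3⟩ := h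
  obtain ⟨K₁, hK₁⟩ := h1.self_of_nhds.exists_lipschitz_bound
  obtain ⟨K₂, hK₂⟩ := h3.exists_lipschitz_bound
  obtain ⟨n, hn⟩ := exists_nat_ge (max K₁ K₂)
  have hn1 : K₁ ≤ (n : ℝ) + 1 := by linarith [le_max_left K₁ K₂]
  have hn2 : K₂ ≤ (n : ℝ) + 1 := by linarith [le_max_right K₁ K₂]
  exact ⟨n, fun s _ hs => hK₂ _ hn2 s hs, fun y _ hy => hK₁ _ hn1 y hy⟩

/-- Subsolutions are right upper semicontinuous at the points of a set on which they are uniformly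
Lipschitz along coordinate lines, if they are so off that set. -/
lemma rightUSCAt_of_subset_lipCross {u : ℝ → ℝ → ℝ} {Ω U F : Set (ℝ × ℝ)} {L : ℝ} (hL : 0 < L)
    (hU : IsOpen U) (hUΩ : U ⊆ Ω) (hheat : ∀ p ∈ Ω, ∃ q ≤ 0, HasHeatAt u q p.1 p.2)
    (hF : ∃ Z, IsClosed Z ∧ F = Ω ∩ Z) (hFL : U ∩ F ⊆ lipCross u Ω L)
    (husc : ∀ p ∈ U, p ∉ F → RightUSCAt u p.1 p.2) {t₀ x₀ : ℝ} (h₀ : (t₀, x₀) ∈ U ∩ F)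
    (hbdd : ∃ M, ∀ᶠ z in 𝓝 (t₀, x₀), u z.1 z.2 ≤ M) : RightUSCAt u t₀ x₀ := by
  intro c hc
  obtain ⟨M, hM⟩ := hbdd
  obtain ⟨q₀, -, hq₀⟩ := hheat _ (hUΩ h₀.1)
  set η := (c - u t₀ x₀) / 7 with hη
  have hη0 : 0 < η := by rw [hη]; linarith
  have hcont : ∀ᶠ x in 𝓝 x₀, u t₀ x < u t₀ x₀ + η :=
    hq₀.continuousAt_space.eventually (gt_mem_nhds (by linarith))
  obtain ⟨δ₁, hδ₁, hball₁⟩ := Metric.eventually_nhds_iff.1 (hM.and (hU.mem_nhds h₀.1))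
  obtain ⟨δ₂, hδ₂, hball₂⟩ := Metric.eventually_nhds_iff.1 hcont
  obtain ⟨ρ, hρ, hρ1, hρ2, hρ3, hρ4⟩ :
      ∃ ρ > 0, ρ < δ₁ ∧ ρ < δ₂ ∧ 2 * ρ < 1 / L ∧ L * ρ ≤ η := by
    have hL' : 0 < 1 / L := by positivity
    have hL'' : 0 < η / L := by positivity
    refine ⟨min (min (δ₁ / 2) (δ₂ / 2)) (min (1 / L / 4) (η / L)), by positivity, ?_, ?_, ?_, ?_⟩
    · linarith [min_le_left (min (δ₁ / 2) (δ₂ / 2)) (min (1 / L / 4) (η / L)),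
        min_le_left (δ₁ / 2) (δ₂ / 2)]
    · linarith [min_le_left (min (δ₁ / 2) (δ₂ / 2)) (min (1 / L / 4) (η / L)),
        min_le_right (δ₁ / 2) (δ₂ / 2)]
    · linarith [min_le_right (min (δ₁ / 2) (δ₂ / 2)) (min (1 / L / 4) (η / L)),
        min_le_left (1 / L / 4) (η / L)]
    · have : min (min (δ₁ / 2) (δ₂ / 2)) (min (1 / L / 4) (η / L)) ≤ η / L :=
        (min_le_right _ _).trans (min_le_right _ _)
      rw [le_div_iff₀ hL] at this
      linarith
  have hR : ∀ t ∈ Icc t₀ (t₀ + ρ), ∀ x ∈ Icc (x₀ - ρ) (x₀ + ρ), u t x ≤ M ∧ (t, x) ∈ U := by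
    intro t ht x hx
    refine hball₁ (y := (t, x)) ?_
    rw [Prod.dist_eq, max_lt_iff, Real.dist_eq, Real.dist_eq]
    exact ⟨abs_lt.2 ⟨by linarith [ht.1], by linarith [ht.2]⟩,
      abs_lt.2 ⟨by linarith [hx.1], by linarith [hx.2]⟩⟩
  have hbot : ∀ x ∈ Icc (x₀ - ρ) (x₀ + ρ), u t₀ x < u t₀ x₀ + η := fun x hx => by
    refine hball₂ (y := x) ?_
    rw [Real.dist_eq]
    exact abs_lt.2 ⟨by linarith [hx.1], by linarith [hx.2]⟩
  have hcross : ∀ s ∈ Icc t₀ (t₀ + ρ), ∀ y ∈ Icc (x₀ - ρ) (x₀ + ρ), (s, y) ∈ F →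
      (∀ t ∈ Icc t₀ (t₀ + ρ), u t y ≤ u t₀ x₀ + 5 * η) ∧
      (∀ x ∈ Icc (x₀ - ρ) (x₀ + ρ), u s x ≤ u t₀ x₀ + 5 * η) := by
    intro s hs y hy hsF
    have hlip := hFL ⟨(hR s hs y hy).2, hsF⟩
    have ht : ∀ t ∈ Icc t₀ (t₀ + ρ), |u t y - u s y| ≤ η := fun t ht => by
      have habs : |t - s| ≤ ρ := abs_le.2 ⟨by linarith [ht.1, hs.2], by linarith [ht.2, hs.1]⟩
      exact (hlip.1 t (hUΩ (hR t ht y hy).2) (by change |t - s| < 1 / L; linarith)).trans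
        ((mul_le_mul_of_nonneg_left habs hL.le).trans hρ4)
    have ht₀ := abs_le.1 (ht t₀ ⟨le_rfl, by linarith⟩)
    have hb := hbot y hy
    refine ⟨fun t htI => ?_, fun x hx => ?_⟩
    · linarith [(abs_le.1 (ht t htI)).2]
    · have habs : |x - y| ≤ 2 * ρ :=
        abs_le.2 ⟨by linarith [hx.1, hy.2], by linarith [hx.2, hy.1]⟩
      have h1 := hlip.2 x (hUΩ (hR s hs x hx).2) (by change |x - y| < 1 / L; linarith)
      have h2 := mul_le_mul_of_nonneg_left habs hL.le
      have h3 := (abs_le.1 h1).2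
      dsimp only at h3
      linarith
  obtain ⟨Z, hZ, rfl⟩ := hF
  have hclosed : IsClosed (Ω ∩ Z ∩ Icc t₀ (t₀ + ρ) ×ˢ Icc (x₀ - ρ) (x₀ + ρ)) := by
    have : Ω ∩ Z ∩ Icc t₀ (t₀ + ρ) ×ˢ Icc (x₀ - ρ) (x₀ + ρ) =
        Z ∩ Icc t₀ (t₀ + ρ) ×ˢ Icc (x₀ - ρ) (x₀ + ρ) := by
      ext ⟨s, y⟩
      exact ⟨fun h => ⟨h.1.2, h.2⟩,
        fun h => ⟨⟨hUΩ (hR s h.2.1 y h.2.2).2, h.1⟩, h.2⟩⟩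
    rw [this]
    exact hZ.inter (isClosed_Icc.prod isClosed_Icc)
  have hmain := le_of_cross (u := u) (m := u t₀ x₀ + 5 * η) (M := |M - (u t₀ x₀ + 5 * η)|) hρ
    hclosed h₀.2 (fun t ht x hx => hheat _ (hUΩ (hR t ht x hx).2))
    (fun t ht x hx => husc _ (hR t ht x hx).2)
    (fun t ht x hx => by linarith [(hR t ht x hx).1, le_abs_self (M - (u t₀ x₀ + 5 * η))])
    (abs_nonneg _) hcross
  set K := |M - (u t₀ x₀ + 5 * η)| / ρ ^ 2
  have hq : ∀ᶠ p : ℝ × ℝ in 𝓝 (t₀, x₀), K * ((p.2 - x₀) ^ 2 + 2 * (p.1 - t₀)) < η := by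
    have : ContinuousAt (fun p : ℝ × ℝ => K * ((p.2 - x₀) ^ 2 + 2 * (p.1 - t₀))) (t₀, x₀) := by
      fun_prop
    exact this.eventually (gt_mem_nhds (by simpa using hη0))
  have hle : 𝓝[≥] t₀ ×ˢ 𝓝 x₀ ≤ 𝓝 (t₀, x₀) := by
    rw [nhds_prod_eq]
    exact prod_mono_left _ nhdsWithin_le_nhds
  have hrect : Icc t₀ (t₀ + ρ) ×ˢ Icc (x₀ - ρ) (x₀ + ρ) ∈ 𝓝[≥] t₀ ×ˢ 𝓝 x₀ :=
    prod_mem_prod (Icc_mem_nhdsGE (by linarith)) (Icc_mem_nhds (by linarith) (by linarith))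
  filter_upwards [hle hq, hrect] with p hp hpR
  have hp : K * ((p.2 - x₀) ^ 2 + 2 * (p.1 - t₀)) < η := hp
  have := hmain p.1 hpR.1 p.2 hpR.2
  linarith

/-- A locally bounded function which satisfies the heat inequality pointwise, with partial
derivatives that need not be continuous, is right upper semicontinuous. -/
theorem rightUSCAt_of_hasHeatAt {u : ℝ → ℝ → ℝ} {Ω : Set (ℝ × ℝ)} (hΩ : IsOpen Ω)
    (hheat : ∀ p ∈ Ω, ∃ q ≤ 0, HasHeatAt u q p.1 p.2)
    (hbdd : ∀ p ∈ Ω, ∃ M, ∀ᶠ z in 𝓝 p, u z.1 z.2 ≤ M) :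
    ∀ p ∈ Ω, RightUSCAt u p.1 p.2 := by
  set S : Set (ℝ × ℝ) := {p | RightUSCAt u p.1 p.2} with hS
  set F : Set (ℝ × ℝ) := Ω ∩ (interior S)ᶜ with hF
  intro p hp
  by_contra hpS
  have hpF : p ∈ F := ⟨hp, fun h => hpS (interior_subset h)⟩
  have hlc : LocallyCompactSpace F := IsLocallyClosed.locallyCompactSpace
    (hΩ.isLocallyClosed.inter isOpen_interior.isClosed_compl.isLocallyClosed)
  have : Nonempty F := ⟨⟨p, hpF⟩⟩
  obtain ⟨n, ⟨z, hz⟩, hzn⟩ := nonempty_interior_of_iUnion_of_closed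
    (f := fun n : ℕ => {z : F | (z : ℝ × ℝ) ∈ lipCross u Ω (n + 1)})
    (fun n => isClosed_of_closure_subset fun z hz =>
      mem_lipCross_of_mem_closure (by positivity) hΩ hheat z.2.1
        (map_mem_closure continuous_subtype_val hz fun y hy => hy))
    (by
      refine eq_univ_of_forall fun z => mem_iUnion.2 ?_
      obtain ⟨q, -, hq⟩ := hheat z z.2.1
      exact hq.exists_mem_lipCross Ω)
  obtain ⟨V, hVsub, hVopen, hzV⟩ := mem_interior.1 hzn
  obtain ⟨U, hUopen, rfl⟩ := isOpen_induced_iff.1 hVopen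
  have hsub : U ∩ Ω ⊆ S := by
    intro y hy
    by_cases hyF : y ∈ F
    · exact rightUSCAt_of_subset_lipCross (L := (n : ℝ) + 1) (by positivity) (hUopen.inter hΩ)
        inter_subset_right hheat ⟨_, isOpen_interior.isClosed_compl, hF⟩
        (fun y' hy' => hVsub (show (⟨y', hy'.2⟩ : F) ∈ Subtype.val ⁻¹' U from hy'.1.1))
        (fun y' hy' hn => interior_subset (by_contra fun h => hn ⟨hy'.2, h⟩))
        ⟨hy, hyF⟩ (hbdd y hy.2)
    · exact interior_subset (by_contra fun h => hyF ⟨hy.2, h⟩)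
  exact hz.2 (interior_maximal hsub (hUopen.inter hΩ) ⟨hzV, hz.1⟩)

/-- Ancient solutions of `ψ_t = ψ_xx + A ψ` of exponential growth, with `A` bounded, are right
upper semicontinuous. -/
lemma rightUSCAt_of_growth {ψ : ℝ → ℝ → ℝ} {A : ℝ → ℝ} {C σ : ℝ} (hC : 0 < C) (hσ : 0 < σ)
    (hA : ∀ x, |A x| ≤ 2) (hheat : ∀ t < 0, ∀ x, HasHeatAt ψ (A x * ψ t x) t x)
    (hbd : ∀ t < 0, ∀ x, |ψ t x| ≤ C * exp (σ * |x|)) :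
    ∀ t < 0, ∀ x, RightUSCAt ψ t x := by
  intro t ht x
  set X := |x| + 1 with hX
  set K := 2 * (C * exp (σ * X)) with hK
  have hK0 : 0 < K := by positivity
  have hbdX : ∀ s < 0, ∀ y ∈ Ioo (-X) X, |ψ s y| ≤ C * exp (σ * X) := fun s hs y hy =>
    (hbd s hs y).trans (by gcongr; exact (abs_lt.2 hy).le)
  have hΩ : IsOpen (Iio (0 : ℝ) ×ˢ Ioo (-X) X) := isOpen_Iio.prod isOpen_Ioo
  have h := rightUSCAt_of_hasHeatAt (u := fun s y => ψ s y - K * s) hΩ ?_ ?_ (t, x)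
    ⟨ht, abs_lt.1 (by rw [hX]; linarith)⟩
  · have := h.sub (z := fun s _ => -(K * s)) (by fun_prop)
    simpa using this
  · rintro ⟨s, y⟩ ⟨hs, hy⟩
    refine ⟨_, ?_, (hheat s hs y).sub ((hasHeatAt_time s y).const_mul K)⟩
    have h1 : |A y * ψ s y| ≤ K := by
      rw [abs_mul]
      exact mul_le_mul (hA y) (hbdX s hs y hy) (abs_nonneg _) zero_le_two
    linarith [le_abs_self (A y * ψ s y)]
  · rintro ⟨s, y⟩ hsy
    refine ⟨K + K * (1 - s), ?_⟩
    have h1 : ∀ᶠ z : ℝ × ℝ in 𝓝 (s, y), s - 1 < z.1 :=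
      continuousAt_fst.eventually (lt_mem_nhds (by simp))
    filter_upwards [hΩ.mem_nhds hsy, h1] with z hz hz1
    have h2 := (le_abs_self _).trans (hbdX z.1 hz.1 z.2 hz.2)
    nlinarith

/-- Comparison with exponentials on a half-line on which the potential is at most `-θ²`. -/
lemma le_exp_of_growth {ψ : ℝ → ℝ → ℝ} {A : ℝ → ℝ} {C σ σ' θ R : ℝ} (hC : 0 < C) (hσ : 0 < σ)
    (hσθ : σ < θ) (hσ' : 0 < σ') (hσ'θ : σ' < θ) (hR : 0 ≤ R)
    (hA : ∀ x, |A x| ≤ 2) (hAR : ∀ x, R ≤ x → A x ≤ -θ ^ 2)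
    (hheat : ∀ t < 0, ∀ x, HasHeatAt ψ (A x * ψ t x) t x)
    (hbd : ∀ t < 0, ∀ x, |ψ t x| ≤ C * exp (σ * |x|)) :
    ∀ t < 0, ∀ x, R ≤ x → ψ t x ≤ C * exp ((σ + σ') * R) * exp (-σ' * x) := by
  intro t ht x hx
  have husc := rightUSCAt_of_growth hC hσ hA hheat hbd
  set D := C * exp ((σ + σ') * R) with hD
  set μ := θ ^ 2 - σ ^ 2 with hμ
  have hμ0 : 0 < μ := by rw [hμ]; nlinarith
  have key : ∀ δ > 0, ∀ T, 0 < T → -T ≤ t →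
      ψ t x ≤ D * exp (-σ' * x) + δ * exp (θ * x) + C * exp (-μ * T) * exp (σ * x + -μ * t) := by
    intro δ hδ T hT hTt
    obtain ⟨X, hXx, hX⟩ : ∃ X, x ≤ X ∧ C * exp (σ * X) ≤ δ * exp (θ * X) := by
      have h1 : Tendsto (fun X => exp ((θ - σ) * X)) atTop atTop :=
        tendsto_exp_atTop.comp (tendsto_id.const_mul_atTop (by linarith))
      obtain ⟨X, hX1, hX2⟩ := ((eventually_ge_atTop x).and
        (h1.eventually_ge_atTop (C / δ))).exists
      refine ⟨X, hX1, ?_⟩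
      rw [div_le_iff₀ hδ] at hX2
      have h2 : exp (θ * X) = exp ((θ - σ) * X) * exp (σ * X) := by
        rw [← exp_add]
        ring_nf
      rw [h2]
      nlinarith [exp_pos (σ * X)]
    set g : ℝ → ℝ → ℝ := fun s y => ψ s y - D * exp (-σ' * y + 0 * s)
      - δ * exp (θ * y + 0 * s) - C * exp (-μ * T) * exp (σ * y + -μ * s) with hg
    have hD0 : 0 < D := by positivity
    have hle : ∀ s < 0, ∀ y, 0 ≤ y → ψ s y ≤ C * exp (σ * y) := fun s hs y hy => by
      have := (le_abs_self _).trans (hbd s hs y)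
      rwa [abs_of_nonneg hy] at this
    have hfin := nonpos_of_parabolic_boundary (v := g) (τ := -T) (T := t) (α := R) (β := X)
      ?_ ?_ ?_ ?_ ?_ t ⟨hTt, le_rfl⟩ x ⟨hx, hXx⟩
    · simp only [hg, zero_mul, add_zero] at hfin
      linarith
    · intro s hs y _
      exact (((((hheat s (hs.2.trans_lt ht) y).sub ((hasHeatAt_exp _ _ s y).const_mul D)).sub
        ((hasHeatAt_exp _ _ s y).const_mul δ)).sub
        ((hasHeatAt_exp _ _ s y).const_mul _)).continuousAt_space).continuousWithinAt
    · intro s hs y _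
      exact (((husc s (hs.2.trans_lt ht) y).sub (by fun_prop)).sub (by fun_prop)).sub
        (by fun_prop)
    · intro s hs
      have hp1 : ∀ y, 0 < D * exp (-σ' * y + 0 * s) := fun y => by positivity
      have hp2 : ∀ y, 0 < δ * exp (θ * y + 0 * s) := fun y => by positivity
      have hp3 : ∀ y, 0 < C * exp (-μ * T) * exp (σ * y + -μ * s) := fun y => by positivity
      constructor
      · have h1 : D * exp (-σ' * R + 0 * s) = C * exp (σ * R) := by
          rw [hD, mul_assoc, ← exp_add]
          ring_nf
        linarith [hle s (hs.2.trans_lt ht) R hR, hp2 R, hp3 R]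
      · have h1 : δ * exp (θ * X + 0 * s) = δ * exp (θ * X) := by simp
        linarith [hle s (hs.2.trans_lt ht) X (by linarith), hp1 X, hp3 X]
    · intro y hy
      have hp1 : 0 < D * exp (-σ' * y + 0 * -T) := by positivity
      have hp2 : 0 < δ * exp (θ * y + 0 * -T) := by positivity
      have h1 : C * exp (-μ * T) * exp (σ * y + -μ * -T) = C * exp (σ * y) := by
        rw [mul_assoc, ← exp_add]
        ring_nf
      linarith [hle (-T) (by linarith) y (hR.trans hy.1)]
    · intro s hs y hy hpos
      refine ⟨_, ?_, (((hheat s (hs.2.trans_lt ht) y).sub ((hasHeatAt_exp _ _ s y).const_mul D)).sub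
        ((hasHeatAt_exp _ _ s y).const_mul δ)).sub ((hasHeatAt_exp _ _ s y).const_mul _)⟩
      have hp1 : 0 < D * exp (-σ' * y + 0 * s) := by positivity
      have hp2 : 0 < δ * exp (θ * y + 0 * s) := by positivity
      have hp3 : 0 < C * exp (-μ * T) * exp (σ * y + -μ * s) := by positivity
      simp only [hg] at hpos
      have h1 : A y * ψ s y ≤ -θ ^ 2 * ψ s y :=
        mul_le_mul_of_nonneg_right (hAR y hy.1.le) (by linarith)
      have h2 : θ ^ 2 * (D * exp (-σ' * y + 0 * s) + δ * exp (θ * y + 0 * s)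
          + C * exp (-μ * T) * exp (σ * y + -μ * s)) ≤ θ ^ 2 * ψ s y :=
        mul_le_mul_of_nonneg_left (by linarith) (sq_nonneg θ)
      have h3 : 0 ≤ (θ ^ 2 - σ' ^ 2) * (D * exp (-σ' * y + 0 * s)) :=
        mul_nonneg (by nlinarith) hp1.le
      rw [hμ] at h2 hp3 ⊢
      linarith
  have hlim1 : ∀ δ > 0, ψ t x ≤ D * exp (-σ' * x) + δ * exp (θ * x) := by
    intro δ hδ
    have hT : Tendsto (fun T => D * exp (-σ' * x) + δ * exp (θ * x)
        + C * exp (-μ * T) * exp (σ * x + -μ * t)) atTop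
        (𝓝 (D * exp (-σ' * x) + δ * exp (θ * x) + C * 0 * exp (σ * x + -μ * t))) := by
      have h0 : Tendsto (fun T => exp (-μ * T)) atTop (𝓝 0) :=
        tendsto_exp_atBot.comp (tendsto_id.const_mul_atTop_of_neg (by linarith))
      exact ((h0.const_mul C).mul_const _).const_add _
    have := ge_of_tendsto hT (by
      filter_upwards [eventually_gt_atTop 0, eventually_ge_atTop (-t)] with T h1 h2
      exact key δ hδ T h1 (by linarith))
    simpa using this
  refine le_of_forall_pos_le_add fun η hη => ?_
  have := hlim1 (η / exp (θ * x)) (by positivity)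
  rwa [div_mul_cancel₀ _ (exp_pos _).ne'] at this

lemma HasHeatAt.neg_space {v : ℝ → ℝ → ℝ} {q t x : ℝ} (h : HasHeatAt v q t (-x)) :
    HasHeatAt (fun s y => v s (-y)) q t x := by
  obtain ⟨v', e, h1, h2, h3⟩ := h
  refine ⟨fun y => -v' (-y), e, ?_, ?_, h3⟩
  · filter_upwards [(continuous_neg.tendsto x).eventually h1] with y hy
    exact (hy.comp y (hasDerivAt_neg y)).congr_deriv (by ring)
  · exact ((h2.comp x (hasDerivAt_neg x)).neg).congr_deriv (by ring)

/-- Two-sided version of `le_exp_of_growth`. -/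
lemma abs_le_exp_of_growth {φ : ℝ → ℝ → ℝ} {A : ℝ → ℝ} {C σ σ' θ R : ℝ} (hC : 0 < C)
    (hσ : 0 < σ) (hσθ : σ < θ) (hσ' : 0 < σ') (hσ'θ : σ' < θ) (hR : 0 ≤ R)
    (hA : ∀ x, |A x| ≤ 2) (hAR : ∀ x, R ≤ |x| → A x ≤ -θ ^ 2)
    (hheat : ∀ t < 0, ∀ x, HasHeatAt φ (A x * φ t x) t x)
    (hbd : ∀ t < 0, ∀ x, |φ t x| ≤ C * exp (σ * |x|)) :
    ∀ t < 0, ∀ x, |φ t x| ≤ C * exp ((σ + σ') * R) * exp (-σ' * |x|) := by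
  have hright : ∀ {ψ : ℝ → ℝ → ℝ} {B : ℝ → ℝ}, (∀ x, |B x| ≤ 2) →
      (∀ x, R ≤ |x| → B x ≤ -θ ^ 2) → (∀ t < 0, ∀ x, HasHeatAt ψ (B x * ψ t x) t x) →
      (∀ t < 0, ∀ x, |ψ t x| ≤ C * exp (σ * |x|)) → ∀ t < 0, ∀ x, R ≤ x →
      |ψ t x| ≤ C * exp ((σ + σ') * R) * exp (-σ' * x) := by
    intro ψ B hB hBR hψ hψbd t ht x hx
    have hBR' : ∀ x, R ≤ x → B x ≤ -θ ^ 2 := fun y hy => hBR y (hy.trans (le_abs_self y))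
    refine abs_le'.2 ⟨le_exp_of_growth hC hσ hσθ hσ' hσ'θ hR hB hBR' hψ hψbd t ht x hx, ?_⟩
    refine le_exp_of_growth (ψ := fun s y => -ψ s y) hC hσ hσθ hσ' hσ'θ hR hB hBR' ?_ ?_ t ht x hx
    · intro s hs y
      simpa using (hψ s hs y).const_mul (-1)
    · simpa using hψbd
  intro t ht x
  rcases le_total R |x| with hx | hx
  · rcases abs_choice x with h | h
    · rw [h] at hx ⊢
      exact hright hA hAR hheat hbd t ht x hx
    · have := hright (ψ := fun s y => φ s (-y)) (B := fun y => A (-y)) (fun y => hA (-y))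
        (fun y hy => hAR (-y) (by rwa [abs_neg])) (fun s hs y => (hheat s hs (-y)).neg_space)
        (fun s hs y => by simpa using hbd s hs (-y)) t ht (-x) (h ▸ hx)
      rw [h]
      simpa using this
  · refine (hbd t ht x).trans ?_
    rw [mul_assoc, ← exp_add]
    gcongr
    nlinarith

lemma f1_eq (v : ℝ) : f1 v = 1 - 3 * v ^ 2 := by
  have h : HasDerivAt f (1 * (1 - v ^ 2) + v * (-(2 * v))) v := by
    refine HasDerivAt.mul (hasDerivAt_id v) ?_
    simpa using (hasDerivAt_pow 2 v).const_sub 1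
  rw [f1, h.deriv]
  ring

lemma abs_f1_w_le (s : ℝ) : |f1 (w s)| ≤ 2 := by
  have h := tanh_sq_lt_one (s / √2)
  rw [f1_eq, abs_le, w]
  constructor <;> nlinarith [sq_nonneg (tanh (s / √2))]

/-- `f'(w(s))` is close to `-2` for `|s|` large. -/
lemma exists_f1_w_le {θ : ℝ} (hθ : θ ^ 2 < 2) : ∃ S, ∀ s, S ≤ |s| → f1 (w s) ≤ -θ ^ 2 := by
  have hcosh : ∀ r : ℝ, tanh r ^ 2 = 1 - 1 / cosh r ^ 2 := fun r => by
    have := cosh_pos r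
    rw [tanh_eq_sinh_div_cosh, div_pow, sinh_sq]
    field_simp
  refine ⟨√2 * (6 / (2 - θ ^ 2)), fun s hs => ?_⟩
  have h2 : 0 < √2 := by positivity
  have hθ' : 0 < 2 - θ ^ 2 := by linarith
  rw [f1_eq, w, hcosh, ← cosh_abs]
  set r := |s / √2| with hr
  have hrs : 6 / (2 - θ ^ 2) ≤ r := by
    rw [hr, abs_div, abs_of_pos h2, le_div_iff₀ h2]
    linarith
  rw [div_le_iff₀ hθ'] at hrs
  have hc : r / 2 ≤ cosh r := by
    rw [cosh_eq]
    linarith [add_one_le_exp r, exp_pos (-r)]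
  have hc1 := one_le_cosh r
  have hfin : 3 * (1 / cosh r ^ 2) ≤ 2 - θ ^ 2 := by
    rw [mul_one_div, div_le_iff₀ (by positivity)]
    have h3 := mul_le_mul_of_nonneg_left hc hθ'.le
    have h4 := mul_le_mul_of_nonneg_left (le_self_pow₀ hc1 two_ne_zero) hθ'.le
    linarith
  linarith

/-- An ancient solution of `φ_t = φ_xx + f'(w(x+x₀))φ` which grows at most like `e^{σ|x|}`
with `σ < √2` actually decays like `e^{-σ̃|x|}` for every `σ̃ < √2`. -/
theorem stmt_12 (x₀ σ : ℝ) (hσ : σ ∈ Set.Ioo 0 (Real.sqrt 2)) (φ : ℝ → ℝ → ℝ)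
    (hreg : ∀ t ≤ (0 : ℝ), ∀ x : ℝ,
      DifferentiableAt ℝ (φ t) x ∧ DifferentiableAt ℝ (deriv (φ t)) x)
    (hpde : ∀ t ≤ (0 : ℝ), ∀ x : ℝ,
      HasDerivAt (fun s => φ s x) (deriv (deriv (φ t)) x + f1 (w (x + x₀)) * φ t x) t)
    (C : ℝ) (hC : 0 < C)
    (hbd : ∀ t ≤ (0 : ℝ), ∀ x : ℝ, |φ t x| ≤ C * Real.exp (σ * |x|)) :
    ∀ σ' ∈ Set.Ioo (0 : ℝ) (Real.sqrt 2), ∃ C' > (0 : ℝ), ∀ t ≤ (0 : ℝ), ∀ x : ℝ,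
      |φ t x| ≤ C' * Real.exp (-σ' * |x|) := by
  intro σ' hσ'
  obtain ⟨θ, hθ, hθ2⟩ := exists_between (max_lt hσ.2 hσ'.2)
  have hσθ : σ < θ := (le_max_left _ _).trans_lt hθ
  have hσ'θ : σ' < θ := (le_max_right _ _).trans_lt hθ
  have hsq : θ ^ 2 < 2 := (lt_sqrt (hσ.1.trans hσθ).le).1 hθ2
  obtain ⟨S, hS⟩ := exists_f1_w_le hsq
  have hbound := abs_le_exp_of_growth (A := fun x => f1 (w (x + x₀))) (R := |S| + |x₀|) hC hσ.1 hσθ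
    hσ'.1 hσ'θ (by positivity) (fun x => abs_f1_w_le _)
    (fun x hx => hS _ (by
      have h1 : |x| ≤ |x + x₀| + |x₀| := by simpa using abs_sub (x + x₀) x₀
      linarith [le_abs_self S]))
    (fun t ht x => ⟨deriv (φ t), _, Eventually.of_forall fun y => (hreg t ht.le y).1.hasDerivAt,
      (hreg t ht.le x).2.hasDerivAt, hpde t ht.le x⟩)
    (fun t ht => hbd t ht.le)
  refine ⟨C * exp ((σ + σ') * (|S| + |x₀|)), by positivity, fun t ht x => ?_⟩
  rcases ht.lt_or_eq with h | rfl
  · exact hbound t h x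
  · have hlim := ((hpde 0 le_rfl x).continuousAt.tendsto.mono_left
      (nhdsWithin_le_nhds (s := Iio 0))).abs
    exact le_of_tendsto hlim (eventually_mem_nhdsWithin.mono fun s hs => hbound s hs x)

end
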